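/- For every integer 0 ≤ δ ≤ 2^s − 1 and every g ∈ 𝓚, the principal ideal ⟨u(x+1)^δ + u² g(x)⟩ of 𝓡 is not self-dual. (In particular, no cyclic code of Type 3, i.e., of the form ⟨u(x+1)^δ + u²(x+1)^t h(x)⟩ with h zero or a unit, is self-dual.) -/

import Mathlib

noncomputable section

open Polynomial

/-- The finite field `GF(2^m)`. -/
abbrev Fq (m : ℕ) : Type := GaloisField 2 m

/-- The ring `R₃ = F[u]/⟨u³⟩`. -/
abbrev R3 (m : ℕ) : Type := AdjoinRoot (X ^ 3 : (Fq m)[X])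

/-- The polynomial `x^{2^s} + 1` over `R₃`. -/
abbrev gR (m s : ℕ) : (R3 m)[X] := X ^ (2 ^ s) + 1

/-- The polynomial `x^{2^s} + 1` over `F`. -/
abbrev gK (m s : ℕ) : (Fq m)[X] := X ^ (2 ^ s) + 1

/-- The ring `𝓡 = R₃[x]/⟨x^{2^s}+1⟩`. -/
abbrev RR (m s : ℕ) : Type := AdjoinRoot (gR m s)

/-- The ring `𝓚 = F[x]/⟨x^{2^s}+1⟩`. -/
abbrev KK (m s : ℕ) : Type := AdjoinRoot (gK m s)

/-- The element `u` of `R₃`. -/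
def uu (m : ℕ) : R3 m := AdjoinRoot.root _

/-- The element `u` of `𝓡`. -/
def uR (m s : ℕ) : RR m s := algebraMap (R3 m) (RR m s) (uu m)

/-- The element `x` of `𝓡`. -/
def xR (m s : ℕ) : RR m s := AdjoinRoot.root _

/-- The element `x` of `𝓚`. -/
def xK (m s : ℕ) : KK m s := AdjoinRoot.root _

lemma gR_monic (m s : ℕ) : (gR m s).Monic := by
  have h : (gR m s) = X ^ (2 ^ s) + C 1 := by simp [gR]
  rw [h]; exact monic_X_pow_add_C _ (by positivity)

lemma gK_monic (m s : ℕ) : (gK m s).Monic := by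
  have h : (gK m s) = X ^ (2 ^ s) + C 1 := by simp [gK]
  rw [h]; exact monic_X_pow_add_C _ (by positivity)

/-- The standard representative (of degree `< 2^s`) of an element of `𝓡`. -/
def repR (m s : ℕ) (c : RR m s) : (R3 m)[X] := AdjoinRoot.modByMonicHom (gR_monic m s) c

/-- The standard representative (of degree `< 2^s`) of an element of `𝓚`. -/
def repK (m s : ℕ) (c : KK m s) : (Fq m)[X] := AdjoinRoot.modByMonicHom (gK_monic m s) c

/-- The `j`-th coefficient of the standard representative of `c ∈ 𝓡`. -/
def coeffR (m s : ℕ) (c : RR m s) (j : ℕ) : R3 m := (repR m s c).coeff j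

/-- The dot product on `𝓡`. -/
def dotR (m s : ℕ) (c d : RR m s) : R3 m :=
  ∑ j ∈ Finset.range (2 ^ s), coeffR m s c j * coeffR m s d j

/-- The dual of a set of codewords. -/
def dualSet (m s : ℕ) (S : Set (RR m s)) : Set (RR m s) :=
  {c | ∀ d ∈ S, dotR m s c d = 0}

/-- A cyclic code (ideal of `𝓡`) is self-dual if it coincides with its dual. -/
def IsSelfDual (m s : ℕ) (C : Ideal (RR m s)) : Prop :=
  (C : Set (RR m s)) = dualSet m s (C : Set (RR m s))

/-- The annihilator of a set of codewords. -/
def annSet (m s : ℕ) (S : Set (RR m s)) : Set (RR m s) :=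
  {c | ∀ d ∈ S, c * d = 0}

/-- The reciprocal `c*(x) = x^{deg c} c(x⁻¹)` of an element of `𝓡`. -/
def recip (m s : ℕ) (c : RR m s) : RR m s :=
  xR m s ^ (repR m s c).natDegree *
    Polynomial.aeval (Ring.inverse (xR m s)) (repR m s c)

/-- Reduction `R₃ → F` modulo `u`. -/
def epsR3 (m : ℕ) : R3 m →+* Fq m :=
  AdjoinRoot.lift (RingHom.id (Fq m)) 0 (by simp)

lemma xK_pow_add_one (m s : ℕ) : (xK m s) ^ (2 ^ s) + 1 = 0 := by
  have h := AdjoinRoot.eval₂_root (gK m s)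
  simpa [gK, xK] using h

lemma xR_pow_add_one (m s : ℕ) : (xR m s) ^ (2 ^ s) + 1 = 0 := by
  have h := AdjoinRoot.eval₂_root (gR m s)
  simpa [gR, xR] using h

/-- Reduction `μ : 𝓡 → 𝓚` modulo `u`. -/
def muRK (m s : ℕ) : RR m s →+* KK m s :=
  AdjoinRoot.lift ((algebraMap (Fq m) (KK m s)).comp (epsR3 m)) (xK m s) (by
    simp only [gR, eval₂_add, eval₂_pow, eval₂_X, eval₂_one]
    exact xK_pow_add_one m s)

/-- The natural inclusion `𝓚 → 𝓡`. -/
def KtoR (m s : ℕ) : KK m s →+* RR m s :=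
  AdjoinRoot.lift ((algebraMap (R3 m) (RR m s)).comp (algebraMap (Fq m) (R3 m))) (xR m s) (by
    simp only [gK, eval₂_add, eval₂_pow, eval₂_X, eval₂_one]
    exact xR_pow_add_one m s)

/-- The `i`-th torsion code of a set `S ⊆ 𝓡`. -/
def TorSet (m s : ℕ) (S : Set (RR m s)) (i : ℕ) : Set (KK m s) :=
  muRK m s '' {f | (uR m s) ^ i * f ∈ S}

/-- The torsion degree `T_i`: the (unique) `k` with `Tor_i = ⟨(x+1)^k⟩`. -/
def Tdeg (m s : ℕ) (S : Set (RR m s)) (i : ℕ) : ℕ :=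
  sInf {k | TorSet m s S i =
    ((Ideal.span {(xK m s + 1) ^ k} : Ideal (KK m s)) : Set (KK m s))}

/-- Substitution `h(x) ↦ h(x⁻¹)` on `𝓚`. -/
def invSub (m s : ℕ) (h : KK m s) : KK m s :=
  Polynomial.aeval (Ring.inverse (xK m s)) (repK m s h)



lemma h_uu2 (m : ℕ) (c : R3 m) (h : uu m ^ 2 * c = 0) : epsR3 m c = 0 := by
  obtain ⟨q, rfl⟩ := AdjoinRoot.mk_surjective c
  have h1 : AdjoinRoot.mk (X ^ 3 : (Fq m)[X]) (X ^ 2 * q) = 0 := by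
    simpa [uu] using h
  rw [AdjoinRoot.mk_eq_zero] at h1
  obtain ⟨t, ht⟩ := h1
  have h2 : q = X * t := by
    apply mul_left_cancel₀ (pow_ne_zero 2 (X_ne_zero (R := Fq m)))
    rw [ht]; ring
  simp [epsR3, h2]

lemma h_uR2 (m s : ℕ) (b : RR m s) (h : uR m s ^ 2 * b = 0) : muRK m s b = 0 := by
  have hb : AdjoinRoot.mk (gR m s) (repR m s b) = b :=
    AdjoinRoot.mk_leftInverse (gR_monic m s) b
  have h0 : repR m s (uR m s ^ 2 * b) = uu m ^ 2 • repR m s b := by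
    have : uR m s ^ 2 * b = (uu m ^ 2) • b := by
      rw [Algebra.smul_def]; simp [uR]
    rw [this]; simp only [repR, map_smul]
  have h1 : uu m ^ 2 • repR m s b = 0 := by
    rw [← h0, h]; simp [repR]
  have h2 : (repR m s b).map (epsR3 m) = 0 := by
    ext j
    rw [coeff_map, coeff_zero]
    apply h_uu2 m
    have := congrArg (fun p => p.coeff j) h1
    simpa using this
  rw [← hb, muRK, AdjoinRoot.lift_mk, ← eval₂_map, h2]
  simp

lemma h_mu_u (m s : ℕ) : muRK m s (uR m s) = 0 := by
  simp [muRK, uR, uu, epsR3]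

lemma h_mu_x (m s : ℕ) : muRK m s (xR m s) = xK m s := by
  simp [muRK, xR]

lemma h_KtoR_x (m s : ℕ) : KtoR m s (xK m s) = xR m s := by
  simp [KtoR, xK]

lemma h_mu_KtoR (m s : ℕ) (k : KK m s) : muRK m s (KtoR m s k) = k := by
  obtain ⟨p, rfl⟩ := AdjoinRoot.mk_surjective k
  induction p using Polynomial.induction_on' with
  | add p q hp hq => simp only [map_add, hp, hq]
  | monomial n a =>
    rw [← C_mul_X_pow_eq_monomial]
    simp [KtoR, h_mu_x]
    simp [muRK, epsR3, xK]

lemma h_decR3 (m : ℕ) (c : R3 m) : ∃ (a : Fq m) (d : R3 m),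
    c = algebraMap _ _ a + uu m * d := by
  obtain ⟨q, rfl⟩ := AdjoinRoot.mk_surjective c
  refine ⟨q.coeff 0, AdjoinRoot.mk _ q.divX, ?_⟩
  have h := congrArg (AdjoinRoot.mk (X ^ 3 : (Fq m)[X])) (divX_mul_X_add q)
  rw [← h, map_add, map_mul, AdjoinRoot.mk_X, AdjoinRoot.mk_C, AdjoinRoot.algebraMap_eq, uu]
  ring

lemma h_dec (m s : ℕ) (r : RR m s) : ∃ (k : KK m s) (t : RR m s),
    r = KtoR m s k + uR m s * t := by
  obtain ⟨p, rfl⟩ := AdjoinRoot.mk_surjective r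
  induction p using Polynomial.induction_on' with
  | add p q hp hq =>
    obtain ⟨k, t, h⟩ := hp
    obtain ⟨k', t', h'⟩ := hq
    exact ⟨k + k', t + t', by rw [map_add, map_add, h, h']; ring⟩
  | monomial n c =>
    obtain ⟨a, d, rfl⟩ := h_decR3 m c
    refine ⟨algebraMap _ _ a * xK m s ^ n, algebraMap _ _ d * xR m s ^ n, ?_⟩
    have e : KtoR m s (algebraMap _ _ a) = algebraMap (R3 m) _ (algebraMap _ _ a) := by
      simp [KtoR]
    rw [map_mul, map_pow, h_KtoR_x, e, ← C_mul_X_pow_eq_monomial, map_mul, map_pow,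
      AdjoinRoot.mk_X, AdjoinRoot.mk_C, ← AdjoinRoot.algebraMap_eq, map_add, map_mul]
    simp only [xR, uR]
    ring

/-- Evaluation at `x = 1`. -/
def evK (m s : ℕ) : KK m s →+* Fq m :=
  AdjoinRoot.lift (RingHom.id (Fq m)) 1 (by
    simp only [gK, eval₂_add, eval₂_pow, eval₂_X, eval₂_one, one_pow]
    exact CharTwo.add_self_eq_zero 1)

lemma h_evK_x (m s : ℕ) : evK m s (xK m s + 1) = 0 := by
  simp [evK, xK]
  exact CharTwo.add_self_eq_zero 1

lemma h_nil (m s δ : ℕ) (hδ : δ < 2 ^ s) (k : KK m s) (h : k * (xK m s + 1) ^ δ = 0) :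
    evK m s k = 0 := by
  obtain ⟨p, rfl⟩ := AdjoinRoot.mk_surjective k
  have h1 : AdjoinRoot.mk (gK m s) (p * (X + 1) ^ δ) = 0 := by
    simpa [xK] using h
  rw [AdjoinRoot.mk_eq_zero] at h1
  have h2 : gK m s = (X + 1) ^ (2 ^ s) := by
    rw [add_pow_char_pow, one_pow]
  obtain ⟨t, ht⟩ := h1
  obtain ⟨e, he⟩ := Nat.exists_eq_add_of_lt hδ
  have h3 : p = (X + 1) ^ (e + 1) * t := by
    have hne : (X + 1 : (Fq m)[X]) ≠ 0 := by
      simpa using X_add_C_ne_zero (1 : Fq m)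
    apply mul_right_cancel₀ (pow_ne_zero δ hne)
    rw [ht, h2, he]; ring
  have h4 : (1 + 1 : Fq m) = 0 := CharTwo.add_self_eq_zero 1
  simp [evK, h3, h4]

lemma h_one_ne (m s : ℕ) : (uR m s) ^ 2 ≠ 0 := by
  intro h
  have h1 := h_uR2 m s 1 (by simpa using h)
  have h2 := congrArg (evK m s) h1
  simp at h2

lemma h_rep (m s : ℕ) (c : R3 m) : repR m s (algebraMap _ _ c) = C c := by
  have h1 : algebraMap (R3 m) (RR m s) c = AdjoinRoot.mk (gR m s) (C c) := rfl
  have : Nontrivial (R3 m) := (epsR3 m).domain_nontrivial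
  rw [repR, h1, AdjoinRoot.modByMonicHom_mk, (modByMonic_eq_self_iff (gR_monic m s)).2]
  have h2 : (gR m s).degree = (2 ^ s : ℕ) := by
    have h : (gR m s) = X ^ (2 ^ s) + C 1 := by simp [gR]
    rw [h]; exact degree_X_pow_add_C (by positivity) _
  rw [h2]
  refine degree_C_le.trans_lt ?_
  have : 0 < 2 ^ s := by positivity
  exact_mod_cast this

lemma h_dot (m s : ℕ) (c d : RR m s) (a : R3 m) (hc : c = algebraMap _ _ a) :
    dotR m s c d = a * coeffR m s d 0 := by
  subst hc
  rw [dotR, Finset.sum_eq_single 0]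
  · simp only [coeffR, h_rep, coeff_C_zero]
  · intro j _ hj
    simp only [coeffR, h_rep, coeff_C, hj, if_false, zero_mul]
  · intro h; simp at h

lemma h_uu3 (m : ℕ) : uu m ^ 3 = 0 := by
  have := AdjoinRoot.eval₂_root (X ^ 3 : (Fq m)[X])
  simpa [uu] using this

lemma h_coeff_u (m s : ℕ) (b : RR m s) (j : ℕ) :
    coeffR m s (uR m s * b) j = uu m * coeffR m s b j := by
  have : uR m s * b = uu m • b := by
    rw [Algebra.smul_def]; simp [uR]
  rw [this]; simp [coeffR, repR]

/-- For every `0 ≤ δ ≤ 2^s − 1` and `g ∈ 𝓚`, the principal ideal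
`⟨u(x+1)^δ + u² g(x)⟩` of `𝓡` is not self-dual. -/
theorem stmt4 (m s : ℕ) (hm : 0 < m) (hs : 0 < s) :
    ∀ δ : ℕ, δ ≤ 2 ^ s - 1 → ∀ g : KK m s,
      ¬ IsSelfDual m s
        (Ideal.span {uR m s * (xR m s + 1) ^ δ + uR m s ^ 2 * KtoR m s g}) := by
  intro δ hδ g hsd
  have hlt : δ < 2 ^ s := by
    have : 0 < 2 ^ s := by positivity
    omega
  have u3 : uR m s ^ 3 = 0 := by rw [uR, ← map_pow, h_uu3, map_zero]
  set w := uR m s * (xR m s + 1) ^ δ + uR m s ^ 2 * KtoR m s g with hw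
  unfold IsSelfDual at hsd
  have hu2 : uR m s ^ 2 ∈ Ideal.span {w} := by
    rw [← SetLike.mem_coe, hsd]
    intro d hd
    obtain ⟨t, rfl⟩ := Ideal.mem_span_singleton.1 hd
    have e : w * t = uR m s * (((xR m s + 1) ^ δ + uR m s * KtoR m s g) * t) := by
      rw [hw]; ring
    rw [e, h_dot m s _ _ (uu m ^ 2) (by simp [uR]), h_coeff_u, ← mul_assoc, ← pow_succ, h_uu3,
      zero_mul]
  obtain ⟨r, hr⟩ := Ideal.mem_span_singleton.1 hu2
  obtain ⟨k, t, rfl⟩ := h_dec m s r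
  rcases Nat.eq_zero_or_pos δ with h0 | hpos
  · have hu : uR m s ∈ Ideal.span {w} := by
      rw [Ideal.mem_span_singleton]
      refine ⟨1 - uR m s * KtoR m s g + uR m s ^ 2 * KtoR m s g ^ 2, ?_⟩
      rw [hw, h0]
      linear_combination (-(uR m s * KtoR m s g ^ 3)) * u3
    have hu' := hu
    rw [← SetLike.mem_coe, hsd] at hu'
    have h1 := hu' _ hu
    rw [h_dot m s (uR m s) _ (uu m) rfl, coeffR] at h1
    have h2 : repR m s (uR m s) = C (uu m) := h_rep m s _
    rw [h2, coeff_C_zero] at h1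
    apply h_one_ne m s
    rw [uR, ← map_pow, pow_two, h1, map_zero]
  · have e1 : k * (xK m s + 1) ^ δ = 0 := by
      have := h_uR2 m s (KtoR m s (k * (xK m s + 1) ^ δ)) (by
        rw [map_mul, map_pow, map_add, h_KtoR_x, map_one]
        rw [hw] at hr
        linear_combination (-uR m s) * hr + (1 - KtoR m s k * KtoR m s g
          - t * (xR m s + 1) ^ δ - uR m s * t * KtoR m s g) * u3)
      rwa [h_mu_KtoR] at this
    have e2 : KtoR m s k * (xR m s + 1) ^ δ = 0 := by
      have := congrArg (KtoR m s) e1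
      rwa [map_mul, map_pow, map_add, h_KtoR_x, map_one, map_zero] at this
    have e3 := h_uR2 m s (1 - t * (xR m s + 1) ^ δ - KtoR m s k * KtoR m s g) (by
      rw [hw] at hr
      linear_combination hr + uR m s * e2 + t * KtoR m s g * u3)
    have e4 := congrArg (evK m s) e3
    simp only [map_sub, map_mul, map_pow, map_add, map_one, h_mu_x, h_mu_KtoR, map_zero,
      h_nil m s δ hlt k e1] at e4
    have e5 := h_evK_x m s
    rw [map_add, map_one] at e5
    rw [e5, zero_pow hpos.ne'] at e4
    simp at e4
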